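/- Support property of the effective force coefficients: Let d be a positive integer and σ>0; write [μ]:=μ^{1/σ}. Let (Ġ_μ)_{μ∈(0,1]} be a family of continuous integrable functions on ℝ^d, depending continuously on μ, such that Ġ_μ is supported in the closed ball {x∈ℝ^d : |x| ≤ [μ]} for every μ∈(0,1/2]. Let (F^{i,m}_μ)_{i,m∈ℕ, μ∈[0,1]} be a family of effective force coefficients for the kernels (Ġ_μ) whose initial conditions are local, i.e. for every i,m and every x∈ℝ^d the measure F^{i,m}_0(x;·) is supported on the single point (x,…,x)∈(ℝ^d)^m. Then for every pair (i,m) there exists a constant c>0 such that for all s∈{0,1}, all μ∈[0,1/2] (with μ>0 when s=1) and every x∈ℝ^d, the measure ∂_μ^s F^{i,m}_μ(x;·) is supported in the set {(y₁,…,y_m)∈(ℝ^d)^m : |x−y₁|∨…∨|x−y_m| ≤ c[μ]}. -/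

import Mathlib

/-!
The convolution of kernels in the flow equation adds up ranges: if `W` and `U` have range `R` and
`G` has range `ρ`, then `B(G,W,U)` has range `2R + ρ`, since a point `y` occurring in `U(z;·)` is
reached from `x` through `w₀` and `z` (`Bweak_eq_zero_of_hasRange`). Hence if all factors on the
right-hand side of the flow equation have range of order `[μ]`, so does `∂_μ F^{i,m}_μ`. For a fixed
Borel set `S` missing the polyball of radius `c[μ]` about `(x,…,x)`, the function
`ν ↦ F^{i,m}_ν(x;S)` then starts from `0` by locality, is continuous on `[0,μ]` and has zero
derivative on `(0,μ)`, so it vanishes at `μ` (`hasRange_step`).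

This closes as an induction because `F^{i,m} = 0` for `m > 3i`: in a nonvanishing term
`F^{j,k+1}`, `F^{i-j,m-k}` one has `j ≥ 1`, so the second factor has smaller index `i-j < i`, and the
first has `j < i` except when `j = i`, `k = m`, where it is `F^{i,m+1}`. The induction thus goes
up in `i` and, for fixed `i`, down in `m`.

Two measure-theoretic points carry the argument. The flow equation only tests against bounded
continuous functions, and `abs_apply_le_of_test` turns such information into bounds on the values
on Borel sets. Moreover `vNorm` is a real-valued supremum, equal to `0` on unbounded kernels, so
the differentiability of the family says something about `F^{i,m}_μ(x;S)` only once the derivative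
kernels are known to be bounded; this too follows from the flow equation (`kerBdd_deriv`).
-/


open MeasureTheory

noncomputable section

/-- Points of `ℝ^d`. -/
abbrev Vd (d : ℕ) := Fin d → ℝ

/-- Integration of a function against a finite signed measure, via the Jordan
decomposition. -/
def smInt {α : Type} [MeasurableSpace α] (s : MeasureTheory.SignedMeasure α) (f : α → ℝ) : ℝ :=
  (∫ y, f y ∂s.toJordanDecomposition.posPart) - ∫ y, f y ∂s.toJordanDecomposition.negPart

/-- The total variation norm of a finite signed measure. -/
def tvNorm {α : Type} [MeasurableSpace α] (s : MeasureTheory.SignedMeasure α) : ℝ :=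
  (s.totalVariation Set.univ).toReal

/-- A kernel on `ℝ^d × Borel((ℝ^d)^m)`: for each `x ∈ ℝ^d` a finite signed measure on
`(ℝ^d)^m`. -/
abbrev Ker (d m : ℕ) := Vd d → MeasureTheory.SignedMeasure (Fin m → Vd d)

/-- The set `A + x` (every component of `A` shifted by `x`), written as a preimage. -/
def shiftSet (d m : ℕ) (x : Vd d) (A : Set (Fin m → Vd d)) : Set (Fin m → Vd d) :=
  (fun z : Fin m → Vd d => fun j => z j - x) ⁻¹' A

/-- Membership in the space `𝒱^m`: (i) for every Borel set `A` the map `x ↦ V(x;A+x)` is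
continuous and `2π`-periodic in each coordinate, (ii) each `V(x;·)` is a signed measure of
finite total variation (automatic for `SignedMeasure`), and (iii) the norm
`‖V‖ = sup_x |V(x;·)|((ℝ^d)^m)` is finite. -/
structure IsV (d m : ℕ) (V : Ker d m) : Prop where
  cont : ∀ A : Set (Fin m → Vd d), MeasurableSet A →
    Continuous fun x : Vd d => V x (shiftSet d m x A)
  periodic : ∀ A : Set (Fin m → Vd d), MeasurableSet A → ∀ (x : Vd d) (i : Fin d),
    V (x + Pi.single i (2 * Real.pi))
        (shiftSet d m (x + Pi.single i (2 * Real.pi)) A)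
      = V x (shiftSet d m x A)
  bdd : BddAbove (Set.range fun x : Vd d => tvNorm (V x))

/-- The `𝒱^m` norm `‖V‖ = sup_x ∫_{(ℝ^d)^m} |V(x; dy₁⋯dy_m)|`. -/
def vNorm (d m : ℕ) (V : Ker d m) : ℝ := ⨆ x : Vd d, tvNorm (V x)

/-- Reassembly of the `y`-variables in the definition of the map `B`: given the
permutation `π`, the variable `y_{π(t)}` comes from the `(t+1)`-st variable of `W` when
`t < k`, and from the `(t-k)`-th variable of `U` otherwise. -/
def assemble (d m k : ℕ) (π : Equiv.Perm (Fin m))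
    (w : Fin (k + 1) → Vd d) (u : Fin (m - k) → Vd d) : Fin m → Vd d := fun i =>
  if h : ((π.symm i : Fin m) : ℕ) < k then
    w ⟨((π.symm i : Fin m) : ℕ) + 1, by omega⟩
  else
    u ⟨((π.symm i : Fin m) : ℕ) - k, by
        have := (π.symm i).isLt; omega⟩

/-- The weak pairing of the kernel `B(G,W,U)` against a test function `f`:
`⟨B(G,W,U)(x;·), f⟩ = (1/m!) Σ_π ∫ W(x; dy,dy_{π(1)},…,dy_{π(k)}) G(y-z)
U(z; dy_{π(k+1)},…,dy_{π(m)}) f(y₁,…,y_m) dz`. -/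
def Bweak (d m k : ℕ) (G : Vd d → ℝ) (W : Ker d (k + 1)) (U : Ker d (m - k))
    (x : Vd d) (f : (Fin m → Vd d) → ℝ) : ℝ :=
  ((Nat.factorial m : ℝ))⁻¹ *
    ∑ π : Equiv.Perm (Fin m),
      smInt (W x) fun w =>
        ∫ z : Vd d, G (w 0 - z) * smInt (U z) fun u => f (assemble d m k π w u)


/-- A family of effective force coefficients `(F^{i,m}_μ)` for the kernels `(Ġ_μ)`,
together with its `μ`-derivative family `F'`: each `F^{i,m}_μ ∈ 𝒱^m`, the family is
continuous in `μ` on `[0,1]` and continuously differentiable in `μ` on `(0,1]` with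
respect to the `𝒱^m` norm, `F^{i,m}_μ = 0` whenever `m > 3i`, and the flow equation
`∂_μ F^{i,m}_μ = -Σ_{j=0}^i Σ_{k=0}^m (1+k)·B(Ġ_μ, F^{j,1+k}_μ, F^{i-j,m-k}_μ)`
holds (in the sense of pairings with bounded continuous test functions). -/
structure FlowFamily (d : ℕ) (Gdot : ℝ → Vd d → ℝ) where
  F : (i m : ℕ) → ℝ → Ker d m
  F' : (i m : ℕ) → ℝ → Ker d m
  mem : ∀ i m : ℕ, ∀ μ ∈ Set.Icc (0 : ℝ) 1, IsV d m (F i m μ)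
  high_zero : ∀ i m : ℕ, ∀ μ ∈ Set.Icc (0 : ℝ) 1, m > 3 * i → F i m μ = 0
  contOn : ∀ i m : ℕ, ∀ μ₀ ∈ Set.Icc (0 : ℝ) 1,
    Filter.Tendsto (fun μ => vNorm d m fun x => F i m μ x - F i m μ₀ x)
      (nhdsWithin μ₀ (Set.Icc 0 1)) (nhds 0)
  hasDeriv : ∀ i m : ℕ, ∀ μ₀ ∈ Set.Ioc (0 : ℝ) 1,
    Filter.Tendsto
      (fun μ => vNorm d m fun x =>
        (μ - μ₀)⁻¹ • (F i m μ x - F i m μ₀ x) - F' i m μ₀ x)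
      (nhdsWithin μ₀ (Set.Ioc 0 1 \ {μ₀})) (nhds 0)
  derivCont : ∀ i m : ℕ, ∀ μ₀ ∈ Set.Ioc (0 : ℝ) 1,
    Filter.Tendsto (fun μ => vNorm d m fun x => F' i m μ x - F' i m μ₀ x)
      (nhdsWithin μ₀ (Set.Ioc 0 1)) (nhds 0)
  flow : ∀ i m : ℕ, ∀ μ ∈ Set.Ioc (0 : ℝ) 1, ∀ x : Vd d,
    ∀ f : (Fin m → Vd d) → ℝ, Continuous f → (∃ M, ∀ y, |f y| ≤ M) →
      smInt (F' i m μ x) f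
        = -∑ j ∈ Finset.range (i + 1), ∑ k ∈ Finset.range (m + 1),
            ((k : ℝ) + 1) * Bweak d m k (Gdot μ) (F j (k + 1) μ) (F (i - j) (m - k) μ) x f


/-- The Euclidean norm `|z|` on `ℝ^d`. -/
def euclNorm (d : ℕ) (z : Vd d) : ℝ := Real.sqrt (∑ i, (z i) ^ 2)

/-! ### Signed measures and their Jordan integral -/

lemma sm_apply {α : Type} [MeasurableSpace α] (s : SignedMeasure α) {A : Set α}
    (hA : MeasurableSet A) :
    s A = s.toJordanDecomposition.posPart.real A - s.toJordanDecomposition.negPart.real A := by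
  conv_lhs => rw [← s.toSignedMeasure_toJordanDecomposition]
  exact Measure.toSignedMeasure_sub_apply hA

lemma tvNorm_eq {α : Type} [MeasurableSpace α] (s : SignedMeasure α) :
    tvNorm s = s.toJordanDecomposition.posPart.real Set.univ
      + s.toJordanDecomposition.negPart.real Set.univ := by
  unfold tvNorm SignedMeasure.totalVariation
  rw [Measure.add_apply, ENNReal.toReal_add (measure_ne_top _ _) (measure_ne_top _ _)]
  rfl

lemma tvNorm_nonneg {α : Type} [MeasurableSpace α] (s : SignedMeasure α) : 0 ≤ tvNorm s :=
  ENNReal.toReal_nonneg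

lemma abs_apply_le_tvNorm {α : Type} [MeasurableSpace α] (s : SignedMeasure α) (A : Set α) :
    |s A| ≤ tvNorm s := by
  by_cases hA : MeasurableSet A
  · rw [sm_apply s hA, tvNorm_eq]
    have h1 : s.toJordanDecomposition.posPart.real A ≤
      s.toJordanDecomposition.posPart.real Set.univ := measureReal_mono (Set.subset_univ _)
    have h2 : s.toJordanDecomposition.negPart.real A ≤
      s.toJordanDecomposition.negPart.real Set.univ := measureReal_mono (Set.subset_univ _)
    have h3 : 0 ≤ s.toJordanDecomposition.posPart.real A := measureReal_nonneg
    have h4 : 0 ≤ s.toJordanDecomposition.negPart.real A := measureReal_nonneg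
    rw [abs_le]; constructor <;> linarith
  · rw [s.not_measurable hA]; simpa using tvNorm_nonneg s

/-- A uniform bound on the values of a signed measure bounds its total variation, because the
positive and negative parts are values of the measure on the two pieces of a Hahn
decomposition. -/
lemma tvNorm_le_of_forall {α : Type} [MeasurableSpace α] (s : SignedMeasure α) {C : ℝ}
    (h : ∀ A, MeasurableSet A → |s A| ≤ C) : tvNorm s ≤ 2 * C := by
  obtain ⟨i, hi, hi2, hi3, hp, hn⟩ := s.toJordanDecomposition_spec
  rw [tvNorm_eq, hp, hn, SignedMeasure.toMeasureOfZeroLE_real_apply _ _ _ MeasurableSet.univ,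
    SignedMeasure.toMeasureOfLEZero_real_apply _ _ _ MeasurableSet.univ, Set.inter_univ,
    Set.inter_univ]
  have h1 := (abs_le.1 (h i hi)).2
  have h2 := (abs_le.1 (h iᶜ hi.compl)).1
  linarith

/-- No measurability of `f` is needed: a non-integrable `f` has Bochner integral `0`. -/
lemma abs_smInt_le {α : Type} [MeasurableSpace α] (s : SignedMeasure α) {f : α → ℝ} {M : ℝ}
    (hf : ∀ y, |f y| ≤ M) : |smInt s f| ≤ M * tvNorm s := by
  have h1 : ‖∫ y, f y ∂s.toJordanDecomposition.posPart‖ ≤ _ :=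
    norm_integral_le_of_norm_le_const (ae_of_all _ hf)
  have h2 : ‖∫ y, f y ∂s.toJordanDecomposition.negPart‖ ≤ _ :=
    norm_integral_le_of_norm_le_const (ae_of_all _ hf)
  rw [Real.norm_eq_abs] at h1 h2
  rw [tvNorm_eq, mul_add]
  unfold smInt
  exact (abs_sub _ _).trans (add_le_add h1 h2)

/-- If `s` vanishes on every measurable subset of `Kᶜ`, then so do both parts of its Jordan
decomposition, hence any `f` vanishing on `K` (measurable or not) integrates to `0`. -/
lemma smInt_eq_zero {α : Type} [MeasurableSpace α] (s : SignedMeasure α) {K : Set α}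
    (hK : MeasurableSet K) (hs : ∀ S, MeasurableSet S → S ⊆ Kᶜ → s S = 0) {f : α → ℝ}
    (hf : ∀ y ∈ K, f y = 0) : smInt s f = 0 := by
  obtain ⟨i, hi, hi2, hi3, hp, hn⟩ := s.toJordanDecomposition_spec
  have h1 : s.toJordanDecomposition.posPart Kᶜ = 0 := by
    rw [← measureReal_eq_zero_iff, hp,
      SignedMeasure.toMeasureOfZeroLE_real_apply _ _ _ hK.compl]
    exact hs _ (hi.inter hK.compl) Set.inter_subset_right
  have h2 : s.toJordanDecomposition.negPart Kᶜ = 0 := by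
    rw [← measureReal_eq_zero_iff, hn,
      SignedMeasure.toMeasureOfLEZero_real_apply _ _ _ hK.compl,
      hs _ (hi.compl.inter hK.compl) Set.inter_subset_right, neg_zero]
  have key : ∀ μ : Measure α, μ Kᶜ = 0 → ∫ y, f y ∂μ = 0 := fun μ hμ =>
    integral_eq_zero_of_ae (by
      filter_upwards [mem_ae_iff.2 hμ] with y hy using hf y hy)
  unfold smInt
  rw [key _ h1, key _ h2, sub_zero]

/-- For closed `F`, the pairings of `s` with the complementary approximations `1 - f_n`, where
`f_n ↓ 1_F`, converge to `s Fᶜ`. -/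
lemma tendsto_smInt_compl {α : Type} [TopologicalSpace α] [HasOuterApproxClosed α]
    [MeasurableSpace α] [BorelSpace α] (s : SignedMeasure α) {F : Set α} (hF : IsClosed F) :
    Filter.Tendsto (fun n => smInt s fun y => 1 - (hF.apprSeq n y : ℝ)) Filter.atTop
      (nhds (s Fᶜ)) := by
  have key : ∀ μ : Measure α, IsFiniteMeasure μ →
      Filter.Tendsto (fun n => ∫ y, (1 - (hF.apprSeq n y : ℝ)) ∂μ) Filter.atTop
        (nhds (μ.real Fᶜ)) := by
    intro μ _
    have e : μ.real Fᶜ = ∫ y, Set.indicator Fᶜ (fun _ => (1 : ℝ)) y ∂μ := by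
      rw [integral_indicator hF.measurableSet.compl]; simp
    rw [e]
    refine tendsto_integral_of_dominated_convergence (fun _ => 1) (fun n => ?_)
      (integrable_const _) (fun n => ae_of_all _ fun y => ?_) (ae_of_all _ fun y => ?_)
    · exact (continuous_const.sub
        (NNReal.continuous_coe.comp (hF.apprSeq n).continuous)).aestronglyMeasurable
    · have h1 : (hF.apprSeq n y : ℝ) ≤ 1 := by
        exact_mod_cast HasOuterApproxClosed.apprSeq_apply_le_one hF n y
      have h0 : (0 : ℝ) ≤ hF.apprSeq n y := NNReal.coe_nonneg _
      rw [Real.norm_eq_abs, abs_le]; constructor <;> linarith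
    · have h := (tendsto_pi_nhds.1 (HasOuterApproxClosed.tendsto_apprSeq hF)) y
      have h' := (NNReal.tendsto_coe.2 h).const_sub 1
      convert h' using 2
      by_cases hy : y ∈ F <;> simp [hy]
  rw [sm_apply s hF.measurableSet.compl]
  exact (key _ inferInstance).sub (key _ inferInstance)

/-- Pairings with continuous functions vanishing off an open set `U` control the values of the
signed measure inside `U`: first on open subsets by approximation, then on all measurable
subsets by outer regularity of the total variation. -/
lemma abs_apply_le_of_test {α : Type} [PseudoEMetricSpace α] [MeasurableSpace α] [BorelSpace α]
    (s : SignedMeasure α) {U : Set α} (hU : IsOpen U) {C : ℝ}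
    (h : ∀ f : α → ℝ, Continuous f → (∀ y, |f y| ≤ 1) → (∀ y, y ∉ U → f y = 0) →
      |smInt s f| ≤ C) {S : Set α} (hS : MeasurableSet S) (hSU : S ⊆ U) : |s S| ≤ C := by
  have hopen : ∀ V : Set α, IsOpen V → V ⊆ U → |s V| ≤ C := by
    intro V hV hVU
    have ht := (tendsto_smInt_compl s hV.isClosed_compl).abs
    rw [compl_compl] at ht
    refine le_of_tendsto ht (Filter.Eventually.of_forall fun n => h _ ?_ ?_ ?_)
    · exact continuous_const.sub (NNReal.continuous_coe.comp
        (hV.isClosed_compl.apprSeq n).continuous)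
    · intro y
      have h1 : (hV.isClosed_compl.apprSeq n y : ℝ) ≤ 1 := by
        exact_mod_cast HasOuterApproxClosed.apprSeq_apply_le_one hV.isClosed_compl n y
      have h0 : (0 : ℝ) ≤ hV.isClosed_compl.apprSeq n y := NNReal.coe_nonneg _
      rw [abs_le]; constructor <;> linarith
    · intro y hy
      rw [HasOuterApproxClosed.apprSeq_apply_eq_one hV.isClosed_compl n
        (fun hyV => hy (hVU hyV))]
      simp
  refine le_of_forall_pos_le_add fun ε hε => ?_
  let m : Measure α := s.toJordanDecomposition.posPart + s.toJordanDecomposition.negPart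
  obtain ⟨V, hSV, hV, -, hlt⟩ := hS.exists_isOpen_sdiff_lt (μ := m) (measure_ne_top _ _)
    (ENNReal.ofReal_pos.2 hε).ne'
  have hT : MeasurableSet ((V ∩ U) \ S) := (hV.inter hU).measurableSet.diff hS
  have hle : m ((V ∩ U) \ S) ≤ ENNReal.ofReal ε :=
    (measure_mono (Set.sdiff_subset_sdiff_left Set.inter_subset_left)).trans hlt.le
  have hsmall : |s ((V ∩ U) \ S)| ≤ ε := by
    have h1 : m.real ((V ∩ U) \ S) ≤ ε := ENNReal.toReal_le_of_le_ofReal hε.le hle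
    have h2 : m.real ((V ∩ U) \ S) = s.toJordanDecomposition.posPart.real ((V ∩ U) \ S)
        + s.toJordanDecomposition.negPart.real ((V ∩ U) \ S) := measureReal_add_apply
    have h3 : 0 ≤ s.toJordanDecomposition.posPart.real ((V ∩ U) \ S) := measureReal_nonneg
    have h4 : 0 ≤ s.toJordanDecomposition.negPart.real ((V ∩ U) \ S) := measureReal_nonneg
    rw [sm_apply s hT, abs_le]; constructor <;> linarith
  have hadd : s S + s ((V ∩ U) \ S) = s (V ∩ U) :=
    VectorMeasure.of_add_of_sdiff hS (hV.inter hU).measurableSet (Set.subset_inter hSV hSU)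
  have h5 := hopen (V ∩ U) (hV.inter hU) Set.inter_subset_right
  rw [abs_le] at h5 hsmall ⊢
  constructor <;> linarith [h5.1, h5.2, hsmall.1, hsmall.2]

/-! ### Uniformly bounded kernels -/

/-- Uniform boundedness of a kernel, phrased through its values. It is equivalent to the
boundedness of the total variations, and is visibly stable under linear combinations. -/
def KerBdd {d m : ℕ} (V : Ker d m) : Prop := ∃ C : ℝ, ∀ x A, |V x A| ≤ C

lemma KerBdd.bddAbove {d m : ℕ} {V : Ker d m} (h : KerBdd V) :
    BddAbove (Set.range fun x : Vd d => tvNorm (V x)) := by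
  obtain ⟨C, hC⟩ := h
  refine ⟨2 * C, ?_⟩
  rintro _ ⟨x, rfl⟩
  exact tvNorm_le_of_forall _ fun A _ => hC x A

lemma IsV.kerBdd {d m : ℕ} {V : Ker d m} (h : IsV d m V) : KerBdd V := by
  obtain ⟨C, hC⟩ := h.bdd
  exact ⟨C, fun x A => (abs_apply_le_tvNorm _ A).trans (hC ⟨x, rfl⟩)⟩

lemma KerBdd.sub {d m : ℕ} {V W : Ker d m} (hV : KerBdd V) (hW : KerBdd W) :
    KerBdd fun x => V x - W x := by
  obtain ⟨C, hC⟩ := hV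
  obtain ⟨D, hD⟩ := hW
  refine ⟨C + D, fun x A => ?_⟩
  rw [sub_apply]
  exact (abs_sub _ _).trans (add_le_add (hC x A) (hD x A))

lemma KerBdd.smul {d m : ℕ} {V : Ker d m} (hV : KerBdd V) (a : ℝ) :
    KerBdd fun x => a • V x := by
  obtain ⟨C, hC⟩ := hV
  refine ⟨|a| * C, fun x A => ?_⟩
  rw [smul_apply, smul_eq_mul, abs_mul]
  exact mul_le_mul_of_nonneg_left (hC x A) (abs_nonneg _)

/-- Boundedness matters: for an unbounded kernel the real supremum `vNorm` is `0`. -/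
lemma KerBdd.abs_apply_le_vNorm {d m : ℕ} {V : Ker d m} (h : KerBdd V) (x : Vd d)
    (A : Set (Fin m → Vd d)) : |V x A| ≤ vNorm d m V :=
  (abs_apply_le_tvNorm _ A).trans (le_ciSup h.bddAbove x)

lemma abs_Bweak_le {d m k : ℕ} {G : Vd d → ℝ} (hG : Integrable G) {W : Ker d (k + 1)}
    {U : Ker d (m - k)} {CW CU : ℝ} (hW : ∀ x, tvNorm (W x) ≤ CW)
    (hU : ∀ x, tvNorm (U x) ≤ CU) (x : Vd d) {f : (Fin m → Vd d) → ℝ} (hf : ∀ y, |f y| ≤ 1) :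
    |Bweak d m k G W U x f| ≤
      ((Nat.factorial m : ℝ))⁻¹ *
        ∑ _π : Equiv.Perm (Fin m), ((∫ z, |G z|) * CU) * CW := by
  have hCU : 0 ≤ CU := (tvNorm_nonneg _).trans (hU x)
  have hI : 0 ≤ ∫ z, |G z| := integral_nonneg fun _ => abs_nonneg _
  unfold Bweak
  rw [abs_mul, abs_of_nonneg (by positivity : (0 : ℝ) ≤ ((Nat.factorial m : ℝ))⁻¹)]
  refine mul_le_mul_of_nonneg_left ?_ (by positivity)
  refine (Finset.abs_sum_le_sum_abs _ _).trans (Finset.sum_le_sum fun π _ => ?_)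
  refine (abs_smInt_le (M := (∫ z, |G z|) * CU) _ fun w => ?_).trans
    (mul_le_mul_of_nonneg_left (hW x) (mul_nonneg hI hCU))
  have hint : Integrable fun z => |G (w 0 - z)| * CU :=
    ((hG.comp_sub_left (w 0)).abs).mul_const CU
  have h := norm_integral_le_of_norm_le hint
    (f := fun z => G (w 0 - z) * smInt (U z) fun u => f (assemble d m k π w u))
    (ae_of_all _ fun z => by
      rw [Real.norm_eq_abs, abs_mul]
      refine mul_le_mul_of_nonneg_left ?_ (abs_nonneg _)
      refine (abs_smInt_le (M := 1) _ fun u => hf _).trans ?_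
      rw [one_mul]; exact hU z)
  rw [integral_mul_const, integral_sub_left_eq_self (fun z => |G z|) volume (w 0)] at h
  exact h

/-- The flow equation bounds the derivative kernels uniformly in `x`; without this the
convergence of difference quotients in `vNorm` would carry no information. -/
lemma kerBdd_deriv {d : ℕ} {Gdot : ℝ → Vd d → ℝ} (FF : FlowFamily d Gdot) (i m : ℕ) {μ : ℝ}
    (hμ : μ ∈ Set.Ioc (0 : ℝ) 1) (hG : Integrable (Gdot μ)) : KerBdd (FF.F' i m μ) := by
  have hb : ∀ i m : ℕ, ∃ C, ∀ x, tvNorm (FF.F i m μ x) ≤ C := by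
    intro i m
    obtain ⟨C, hC⟩ := (FF.mem i m μ ⟨hμ.1.le, hμ.2⟩).bdd
    exact ⟨C, fun x => hC ⟨x, rfl⟩⟩
  choose C hC using hb
  refine ⟨∑ j ∈ Finset.range (i + 1), ∑ k ∈ Finset.range (m + 1), ((k : ℝ) + 1) *
    (((Nat.factorial m : ℝ))⁻¹ * ∑ _π : Equiv.Perm (Fin m),
      ((∫ z, |Gdot μ z|) * C (i - j) (m - k)) * C j (k + 1)), fun x => ?_⟩
  suffices main : ∀ A, MeasurableSet A → |FF.F' i m μ x A| ≤ _ by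
    intro A
    by_cases hA : MeasurableSet A
    · exact main A hA
    · rw [VectorMeasure.not_measurable _ hA]
      simpa using (abs_nonneg _).trans (main ∅ MeasurableSet.empty)
  exact fun A hA =>
    abs_apply_le_of_test (FF.F' i m μ x) isOpen_univ
      (fun f hf h1 _ => by
        rw [FF.flow i m μ hμ x f hf ⟨1, h1⟩, abs_neg]
        refine (Finset.abs_sum_le_sum_abs _ _).trans (Finset.sum_le_sum fun j _ => ?_)
        refine (Finset.abs_sum_le_sum_abs _ _).trans (Finset.sum_le_sum fun k _ => ?_)
        rw [abs_mul, abs_of_nonneg (by positivity : (0 : ℝ) ≤ (k : ℝ) + 1)]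
        exact mul_le_mul_of_nonneg_left (abs_Bweak_le hG (hC _ _) (hC _ _) x h1)
          (by positivity)) hA (Set.subset_univ _)

/-! ### Supports -/

lemma euclNorm_eq (d : ℕ) (z : Vd d) : euclNorm d z = ‖WithLp.toLp 2 z‖ := by
  simp [euclNorm, EuclideanSpace.norm_eq]

lemma euclNorm_nonneg (d : ℕ) (z : Vd d) : 0 ≤ euclNorm d z := Real.sqrt_nonneg _

lemma euclNorm_add_le (d : ℕ) (a b : Vd d) :
    euclNorm d (a + b) ≤ euclNorm d a + euclNorm d b := by
  simp only [euclNorm_eq, WithLp.toLp_add]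
  exact norm_add_le _ _

lemma euclNorm_sub_le (d : ℕ) (a b c : Vd d) :
    euclNorm d (a - c) ≤ euclNorm d (a - b) + euclNorm d (b - c) := by
  have h := euclNorm_add_le d (a - b) (b - c)
  rwa [sub_add_sub_cancel] at h

/-- The set of `(y₁,…,y_m)` with `|x - y_j| ≤ R` for every `j`. -/
def polyBall (d m : ℕ) (x : Vd d) (R : ℝ) : Set (Fin m → Vd d) :=
  {y | ∀ j, euclNorm d (x - y j) ≤ R}

lemma isClosed_polyBall (d m : ℕ) (x : Vd d) (R : ℝ) : IsClosed (polyBall d m x R) := by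
  have : polyBall d m x R = ⋂ j, {y | euclNorm d (x - y j) ≤ R} := by
    ext y; simp [polyBall]
  rw [this]
  refine isClosed_iInter fun j => isClosed_le ?_ continuous_const
  unfold euclNorm
  fun_prop

/-- The kernel `V` has range `R`: each `V(x;·)` is supported in the polyball of radius `R`
about `(x,…,x)`. -/
def HasRange {d m : ℕ} (V : Ker d m) (R : ℝ) : Prop :=
  ∀ x, ∀ S : Set (Fin m → Vd d), MeasurableSet S →
    (∀ y ∈ S, ∃ j, R < euclNorm d (x - y j)) → V x S = 0

lemma HasRange.smInt_eq_zero {d m : ℕ} {V : Ker d m} {R : ℝ} (h : HasRange V R) (x : Vd d)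
    {f : (Fin m → Vd d) → ℝ} (hf : ∀ y ∈ polyBall d m x R, f y = 0) : smInt (V x) f = 0 := by
  refine _root_.smInt_eq_zero _ (isClosed_polyBall d m x R).measurableSet
    (fun S hS hsub => h x S hS fun y hy => ?_) hf
  have := hsub hy
  simpa [polyBall] using this

lemma smInt_zero {α : Type} [MeasurableSpace α] (f : α → ℝ) :
    smInt (0 : SignedMeasure α) f = 0 :=
  smInt_eq_zero 0 MeasurableSet.empty (f := f) (fun _ _ _ => rfl) (by simp)

/-- Convolving kernels of range `R` through a kernel `G` of range `ρ` has range `2R + ρ`: the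
path from `x` to an argument of `U` passes through `w₀` and `z`. -/
lemma Bweak_eq_zero_of_hasRange {d m k : ℕ} {G : Vd d → ℝ} {W : Ker d (k + 1)}
    {U : Ker d (m - k)} {R ρ R' : ℝ} (hρ : 0 ≤ ρ) (hR' : 2 * R + ρ ≤ R')
    (hG : ∀ z, ρ < euclNorm d z → G z = 0) (hW : HasRange W R) (hU : HasRange U R) (x : Vd d)
    {f : (Fin m → Vd d) → ℝ} (hf : ∀ y ∈ polyBall d m x R', f y = 0) :
    Bweak d m k G W U x f = 0 := by
  unfold Bweak
  rw [Finset.sum_eq_zero, mul_zero]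
  intro π _
  refine hW.smInt_eq_zero x fun w hw => ?_
  refine integral_eq_zero_of_ae (ae_of_all _ fun z => ?_)
  rcases lt_or_ge ρ (euclNorm d (w 0 - z)) with hz | hz
  · simp [hG _ hz]
  · change G (w 0 - z) * smInt (U z) (fun u => f (assemble d m k π w u)) = 0
    rw [hU.smInt_eq_zero z, mul_zero]
    intro u hu
    refine hf _ fun i => ?_
    have hw0 := hw 0
    have hR : 0 ≤ R := (euclNorm_nonneg _ _).trans hw0
    unfold assemble
    split_ifs with h
    · exact (hw _).trans (by linarith)
    · refine (euclNorm_sub_le d x (w 0) _).trans ?_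
      refine (add_le_add hw0 ((euclNorm_sub_le d (w 0) z _).trans
        (add_le_add hz (hu _)))).trans ?_
      linarith

lemma Bweak_zero_left {d m k : ℕ} (G : Vd d → ℝ) (U : Ker d (m - k)) (x : Vd d)
    (f : (Fin m → Vd d) → ℝ) : Bweak d m k G 0 U x f = 0 := by
  simp [Bweak, smInt_zero]

lemma Bweak_zero_right {d m k : ℕ} (G : Vd d → ℝ) (W : Ker d (k + 1)) (x : Vd d)
    (f : (Fin m → Vd d) → ℝ) : Bweak d m k G W 0 x f = 0 := by
  have h0 : ∀ s : SignedMeasure (Fin (k + 1) → Vd d), smInt s (fun _ => 0) = 0 := fun s => by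
    simp [smInt]
  simp [Bweak, smInt_zero, h0]

/-! ### Integration along the flow -/

/-- For fixed `x` and `S`, convergence in the kernel norm makes `μ ↦ F^{i,m}_μ(x;S)` a
continuous function on `[0,1]`. -/
lemma continuousOn_F_apply {d : ℕ} {Gdot : ℝ → Vd d → ℝ} (FF : FlowFamily d Gdot) (i m : ℕ)
    (x : Vd d) (S : Set (Fin m → Vd d)) :
    ContinuousOn (fun μ => FF.F i m μ x S) (Set.Icc 0 1) := by
  intro μ₀ hμ₀
  refine tendsto_iff_norm_sub_tendsto_zero.2 ?_
  refine squeeze_zero' (Filter.Eventually.of_forall fun _ => norm_nonneg _) ?_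
    (FF.contOn i m μ₀ hμ₀)
  filter_upwards [self_mem_nhdsWithin] with μ hμ
  exact ((FF.mem i m μ hμ).kerBdd.sub (FF.mem i m μ₀ hμ₀).kerBdd).abs_apply_le_vNorm x S

lemma hasDerivAt_F_apply {d : ℕ} {Gdot : ℝ → Vd d → ℝ} (FF : FlowFamily d Gdot) (i m : ℕ)
    (x : Vd d) (S : Set (Fin m → Vd d)) {μ₀ : ℝ} (hμ₀ : μ₀ ∈ Set.Ioo (0 : ℝ) 1)
    (hG : Integrable (Gdot μ₀)) :
    HasDerivAt (fun μ => FF.F i m μ x S) (FF.F' i m μ₀ x S) μ₀ := by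
  have hmem : μ₀ ∈ Set.Ioc (0 : ℝ) 1 := ⟨hμ₀.1, hμ₀.2.le⟩
  have hev : ∀ᶠ μ in nhdsWithin μ₀ {μ₀}ᶜ, μ ∈ Set.Ioc (0 : ℝ) 1 \ {μ₀} := by
    filter_upwards [self_mem_nhdsWithin,
      mem_nhdsWithin_of_mem_nhds (Ioc_mem_nhds hμ₀.1 hμ₀.2)] with μ h1 h2 using ⟨h2, h1⟩
  have hle : nhdsWithin μ₀ {μ₀}ᶜ ≤ nhdsWithin μ₀ (Set.Ioc 0 1 \ {μ₀}) :=
    le_inf inf_le_left (Filter.le_principal_iff.2 hev)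
  rw [hasDerivAt_iff_tendsto_slope]
  refine tendsto_iff_norm_sub_tendsto_zero.2 ?_
  refine squeeze_zero' (Filter.Eventually.of_forall fun _ => norm_nonneg _) ?_
    ((FF.hasDeriv i m μ₀ hmem).mono_left hle)
  filter_upwards [hev] with μ hμ
  have hb := ((((FF.mem i m μ ⟨hμ.1.1.le, hμ.1.2⟩).kerBdd.sub
    (FF.mem i m μ₀ ⟨hμ₀.1.le, hμ₀.2.le⟩).kerBdd).smul (μ - μ₀)⁻¹).sub
      (kerBdd_deriv FF i m hmem hG)).abs_apply_le_vNorm x S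
  simpa [slope_def_field, div_eq_inv_mul] using hb

/-- The inductive step: if in every term of the flow equation either one factor vanishes or both
factors have range `C [μ]`, then `F^{i,m}_μ` and its derivative have range `c [μ]` as soon as
`2C + 1 ≤ c`. -/
lemma hasRange_step {d : ℕ} {σ : ℝ} (hσ : 0 < σ) {Gdot : ℝ → Vd d → ℝ}
    (hGi : ∀ μ ∈ Set.Ioc (0 : ℝ) 1, Integrable (Gdot μ))
    (hGsupp : ∀ μ ∈ Set.Ioc (0 : ℝ) (1 / 2), ∀ x : Vd d,
      μ ^ (1 / σ) < euclNorm d x → Gdot μ x = 0)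
    (FF : FlowFamily d Gdot) (i m : ℕ)
    (hinit : ∀ (x : Vd d) (S : Set (Fin m → Vd d)), MeasurableSet S →
      (fun _ : Fin m => x) ∉ S → FF.F i m 0 x S = 0)
    {c : ℝ} (hc : 0 < c) (C : ℕ → ℕ → ℝ)
    (hC : ∀ j ≤ i, ∀ k ≤ m, 2 * C j k + 1 ≤ c)
    (h : ∀ j ≤ i, ∀ k ≤ m, ∀ μ ∈ Set.Ioc (0 : ℝ) (1 / 2),
      (HasRange (FF.F j (k + 1) μ) (C j k * μ ^ (1 / σ)) ∧
        HasRange (FF.F (i - j) (m - k) μ) (C j k * μ ^ (1 / σ))) ∨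
      FF.F j (k + 1) μ = 0 ∨ FF.F (i - j) (m - k) μ = 0) :
    (∀ μ ∈ Set.Icc (0 : ℝ) (1 / 2), HasRange (FF.F i m μ) (c * μ ^ (1 / σ))) ∧
    (∀ μ ∈ Set.Ioc (0 : ℝ) (1 / 2), HasRange (FF.F' i m μ) (c * μ ^ (1 / σ))) := by
  have hF' : ∀ μ ∈ Set.Ioc (0 : ℝ) (1 / 2), HasRange (FF.F' i m μ) (c * μ ^ (1 / σ)) := by
    intro μ hμ x S hS hSR
    have hμ1 : μ ∈ Set.Ioc (0 : ℝ) 1 := ⟨hμ.1, hμ.2.trans (by norm_num)⟩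
    have hρ : 0 ≤ μ ^ (1 / σ) := Real.rpow_nonneg hμ.1.le _
    have := abs_apply_le_of_test (FF.F' i m μ x) (C := 0)
      (isClosed_polyBall d m x (c * μ ^ (1 / σ))).isOpen_compl
      (fun f hf h1 h0 => by
        have hf0 : ∀ y ∈ polyBall d m x (c * μ ^ (1 / σ)), f y = 0 :=
          fun y hy => h0 y (fun hy' => hy' hy)
        rw [FF.flow i m μ hμ1 x f hf ⟨1, h1⟩, Finset.sum_eq_zero, neg_zero, abs_zero]
        intro j hj
        refine Finset.sum_eq_zero fun k hk => ?_
        have hj' : j ≤ i := Nat.lt_succ_iff.1 (Finset.mem_range.1 hj)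
        have hk' : k ≤ m := Nat.lt_succ_iff.1 (Finset.mem_range.1 hk)
        rcases h j hj' k hk' μ hμ with ⟨hW, hU⟩ | hW | hU
        · rw [Bweak_eq_zero_of_hasRange hρ ?_ (hGsupp μ hμ) hW hU x hf0, mul_zero]
          nlinarith [mul_le_mul_of_nonneg_right (hC j hj' k hk') hρ]
        · rw [hW, Bweak_zero_left, mul_zero]
        · rw [hU, Bweak_zero_right, mul_zero]) hS
      (fun y hy hyb => by
        obtain ⟨j, hj⟩ := hSR y hy
        exact absurd (hyb j) (not_le.2 hj))
    exact abs_nonpos_iff.1 this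
  refine ⟨fun μ hμ x S hS hSR => ?_, hF'⟩
  have h0S : FF.F i m 0 x S = 0 := by
    refine hinit x S hS fun hx => ?_
    obtain ⟨j, hj⟩ := hSR _ hx
    have : 0 ≤ c * μ ^ (1 / σ) := mul_nonneg hc.le (Real.rpow_nonneg hμ.1 _)
    rw [sub_self, euclNorm_eq, WithLp.toLp_zero, norm_zero] at hj
    linarith
  rcases hμ.1.eq_or_lt with rfl | hpos
  · exact h0S
  -- The polyballs increase with the scale, so `S` avoids those at all scales `ν ≤ μ`.
  obtain ⟨ν, hν, hslope⟩ := exists_hasDerivAt_eq_slope (fun ν => FF.F i m ν x S)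
    (fun ν => FF.F' i m ν x S) hpos
    ((continuousOn_F_apply FF i m x S).mono
      (Set.Icc_subset_Icc_right (hμ.2.trans (by norm_num))))
    (fun ν hν => hasDerivAt_F_apply FF i m x S ⟨hν.1, by linarith [hν.2, hμ.2]⟩
      (hGi ν ⟨hν.1, by linarith [hν.2, hμ.2]⟩))
  rw [hF' ν ⟨hν.1, hν.2.le.trans hμ.2⟩ x S hS fun y hy => ?_, h0S, sub_zero, sub_zero,
    eq_comm, div_eq_zero_iff] at hslope
  · exact hslope.resolve_right hpos.ne'
  · obtain ⟨j, hj⟩ := hSR y hy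
    refine ⟨j, lt_of_le_of_lt (mul_le_mul_of_nonneg_left ?_ hc.le) hj⟩
    exact Real.rpow_le_rpow hν.1.le hν.2.le (by positivity)

/-- Support property of the effective force coefficients: if each `Ġ_μ`
(`μ ∈ (0,1/2]`) is supported in the closed ball of radius `[μ] = μ^{1/σ}` and the initial
conditions are local (each `F^{i,m}_0(x;·)` is supported on the point `(x,…,x)`), then for
every `(i,m)` there is `c > 0` such that for `s ∈ {0,1}` and `μ ∈ [0,1/2]` (with `μ > 0`
when `s = 1`) the measure `∂_μ^s F^{i,m}_μ(x;·)` is supported in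
`{(y₁,…,y_m) : max_j |x - y_j| ≤ c[μ]}`. -/
theorem stmt4 (d : ℕ) (hd : 0 < d) (σ : ℝ) (hσ : 0 < σ) (Gdot : ℝ → Vd d → ℝ)
    (hGc : ∀ μ ∈ Set.Ioc (0 : ℝ) 1, Continuous (Gdot μ) ∧ Integrable (Gdot μ))
    (hGcont : ContinuousOn (fun p : ℝ × Vd d => Gdot p.1 p.2)
      (Set.Ioc (0 : ℝ) 1 ×ˢ Set.univ))
    (hGsupp : ∀ μ ∈ Set.Ioc (0 : ℝ) (1 / 2), ∀ x : Vd d,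
      μ ^ (1 / σ) < euclNorm d x → Gdot μ x = 0)
    (FF : FlowFamily d Gdot)
    (hinit : ∀ (i m : ℕ) (x : Vd d) (S : Set (Fin m → Vd d)), MeasurableSet S →
      (fun _ : Fin m => x) ∉ S → FF.F i m 0 x S = 0) :
    ∀ i m : ℕ, ∃ c : ℝ, 0 < c ∧
      (∀ μ ∈ Set.Icc (0 : ℝ) (1 / 2), ∀ (x : Vd d) (S : Set (Fin m → Vd d)),
        MeasurableSet S →
        (∀ y ∈ S, ∃ j : Fin m, c * μ ^ (1 / σ) < euclNorm d (x - y j)) →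
        FF.F i m μ x S = 0) ∧
      (∀ μ ∈ Set.Ioc (0 : ℝ) (1 / 2), ∀ (x : Vd d) (S : Set (Fin m → Vd d)),
        MeasurableSet S →
        (∀ y ∈ S, ∃ j : Fin m, c * μ ^ (1 / σ) < euclNorm d (x - y j)) →
        FF.F' i m μ x S = 0) := by
  -- Outer induction on `i`; for fixed `i`, the term `j = i`, `k = m` involves `F^{i,m+1}`, so the
  -- inner induction runs downwards in `m`, on the truncated difference `3i - m`.
  intro i
  induction i using Nat.strong_induction_on with
  | _ i ihi =>
  intro m
  induction ht : 3 * i - m using Nat.strong_induction_on generalizing m with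
  | _ t iht =>
  have hz : ∀ (a b : ℕ) (μ : ℝ), μ ∈ Set.Ioc (0 : ℝ) (1 / 2) → 3 * a < b → FF.F a b μ = 0 :=
    fun a b μ hμ hab => FF.high_zero a b μ ⟨hμ.1.le, hμ.2.trans (by norm_num)⟩ hab
  have hmono : ∀ (a b : ℕ) (c C μ : ℝ), μ ∈ Set.Ioc (0 : ℝ) (1 / 2) → c ≤ C →
      HasRange (FF.F a b μ) (c * μ ^ (1 / σ)) → HasRange (FF.F a b μ) (C * μ ^ (1 / σ)) := by
    intro a b c C μ hμ hcC h x S hS hSR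
    refine h x S hS fun y hy => ?_
    obtain ⟨j, hj⟩ := hSR y hy
    exact ⟨j, lt_of_le_of_lt
      (mul_le_mul_of_nonneg_right hcC (Real.rpow_nonneg hμ.1.le _)) hj⟩
  have key : ∀ j k : ℕ, ∃ C : ℝ, 0 ≤ C ∧ (j ≤ i → k ≤ m → ∀ μ ∈ Set.Ioc (0 : ℝ) (1 / 2),
      (HasRange (FF.F j (k + 1) μ) (C * μ ^ (1 / σ)) ∧
        HasRange (FF.F (i - j) (m - k) μ) (C * μ ^ (1 / σ))) ∨
      FF.F j (k + 1) μ = 0 ∨ FF.F (i - j) (m - k) μ = 0) := by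
    intro j k
    by_cases hvan : ¬ (j ≤ i ∧ k ≤ m) ∨ 3 * j < k + 1 ∨ 3 * (i - j) < m - k
    · refine ⟨0, le_rfl, fun hj hk μ hμ => Or.inr ?_⟩
      rcases hvan with h | h | h
      · exact absurd ⟨hj, hk⟩ h
      · exact Or.inl (hz _ _ μ hμ h)
      · exact Or.inr (hz _ _ μ hμ h)
    · have hj0 : 0 < j := by omega
      have h1 : ∃ c : ℝ, 0 < c ∧ ∀ μ ∈ Set.Icc (0 : ℝ) (1 / 2),
          HasRange (FF.F j (k + 1) μ) (c * μ ^ (1 / σ)) := by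
        by_cases hji : j < i
        · obtain ⟨c, hc, h, -⟩ := ihi j hji (k + 1)
          exact ⟨c, hc, h⟩
        · obtain rfl : j = i := by omega
          obtain rfl : k = m := by omega
          obtain ⟨c, hc, h, -⟩ := iht (3 * j - (k + 1)) (by omega) (k + 1) rfl
          exact ⟨c, hc, h⟩
      obtain ⟨c₁, hc₁, h1⟩ := h1
      obtain ⟨c₂, hc₂, h2, -⟩ := ihi (i - j) (by omega) (m - k)
      refine ⟨c₁ + c₂, by positivity, fun _ _ μ hμ => Or.inl ⟨?_, ?_⟩⟩
      · exact hmono _ _ c₁ _ μ hμ (by linarith) (h1 μ ⟨hμ.1.le, hμ.2⟩)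
      · exact hmono _ _ c₂ _ μ hμ (by linarith) (h2 μ ⟨hμ.1.le, hμ.2⟩)
  choose C hC0 hC using key
  have hsum : 0 ≤ ∑ j ∈ Finset.range (i + 1), ∑ k ∈ Finset.range (m + 1), C j k :=
    Finset.sum_nonneg fun j _ => Finset.sum_nonneg fun k _ => hC0 j k
  have hc : 0 < 2 * (∑ j ∈ Finset.range (i + 1), ∑ k ∈ Finset.range (m + 1), C j k) + 1 := by
    linarith
  refine ⟨_, hc, hasRange_step hσ (fun μ hμ => (hGc μ hμ).2) hGsupp FF i m (hinit i m) hc C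
    (fun j hj k hk => ?_) (fun j hj k hk => hC j k hj hk)⟩
  have h1 : C j k ≤ ∑ k ∈ Finset.range (m + 1), C j k :=
    Finset.single_le_sum (f := fun k => C j k) (fun k _ => hC0 j k)
      (Finset.mem_range.2 (by omega))
  have h2 : ∑ k ∈ Finset.range (m + 1), C j k ≤
      ∑ j ∈ Finset.range (i + 1), ∑ k ∈ Finset.range (m + 1), C j k :=
    Finset.single_le_sum (f := fun j => ∑ k ∈ Finset.range (m + 1), C j k)
      (fun j _ => Finset.sum_nonneg fun k _ => hC0 j k) (Finset.mem_range.2 (by omega))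
  linarith
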